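/- Let m > 0, let B and M be positive integers, let 0 < R ≤ M, and let 0 < ε < 1. Define S_ε = { α ∈ [0, ∞)^B : #{ b : α_b ≥ 1 − ε } ≥ B(1 − R/M) }. For s > 1, the integral I(s) = ∫_{S_ε} s^{−m Σ_{b=1}^B α_b} dα (with respect to B-dimensional Lebesgue measure) is finite, and lim_{s → ∞} −log I(s) / log s = m (1 − ε) ⌈ B(1 − R/M) ⌉. -/

import Mathlib

open MeasureTheory Filter

/-! With `t = m log s` the integrand is `exp (-t ∑ α_b)`, so `-log I(s) / log s` is `-m` times
`cgf X μ t / t` for `X = -∑ α_b` and `μ` the Lebesgue measure on `S_ε`. As `t → ∞` such a quotient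
tends to the essential supremum of `X`: the upper bound factors out `exp ((t - t₀) sup X)`, the
lower bound is Markov's inequality. Because `S_ε` is an upper set, each of its points is a limit of
interior points, so that the essential infimum of `∑ α_b` on `S_ε` is its infimum. The latter is
attained by setting exactly `⌈B (1 - R / M)⌉` coordinates to `1 - ε` and the others to `0`. -/

section LaplacePrinciple

open ProbabilityTheory Topology

variable {Ω : Type*} [MeasurableSpace Ω] {μ : Measure Ω} {X : Ω → ℝ} {t : ℝ}

theorem exp_mul_measureReal_le_mgf (ht : 0 ≤ t) (c : ℝ)
    (h_int : Integrable (fun ω => Real.exp (t * X ω)) μ) :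
    Real.exp (t * c) * μ.real {ω | c ≤ X ω} ≤ mgf X μ t := by
  calc Real.exp (t * c) * μ.real {ω | c ≤ X ω}
      ≤ Real.exp (t * c) * μ.real {ω | Real.exp (t * c) ≤ Real.exp (t * X ω)} := by
        refine mul_le_mul_of_nonneg_left (measureReal_mono (fun ω hω => ?_) ?_) (Real.exp_pos _).le
        · exact Real.exp_le_exp.2 (mul_le_mul_of_nonneg_left hω ht)
        · exact (h_int.measure_ge_lt_top (Real.exp_pos _)).ne
    _ ≤ mgf X μ t :=
        mul_meas_ge_le_integral_of_nonneg (ae_of_all μ fun ω => (Real.exp_pos _).le) h_int _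

theorem measure_le_lt_top_of_integrable_exp_mul (ht : 0 < t) (c : ℝ)
    (h_int : Integrable (fun ω => Real.exp (t * X ω)) μ) : μ {ω | c ≤ X ω} < ⊤ := by
  simpa only [Real.exp_le_exp, mul_le_mul_iff_right₀ ht] using
    h_int.measure_ge_lt_top (Real.exp_pos (t * c))

theorem mgf_le_exp_mul_mgf_of_ae_le {b t₀ : ℝ} (hX : ∀ᵐ ω ∂μ, X ω ≤ b)
    (h_int : Integrable (fun ω => Real.exp (t₀ * X ω)) μ) (ht : t₀ ≤ t) :
    mgf X μ t ≤ Real.exp ((t - t₀) * b) * mgf X μ t₀ := by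
  rw [mgf, mgf, ← integral_const_mul]
  refine integral_mono_of_nonneg (ae_of_all μ fun ω => (Real.exp_pos _).le)
    (h_int.const_mul _) ?_
  filter_upwards [hX] with ω hω
  rw [← Real.exp_add, Real.exp_le_exp]
  linarith [mul_le_mul_of_nonneg_left hω (sub_nonneg.2 ht)]

theorem eventually_lt_cgf_div {c : ℝ} (hc : ∃ᵐ ω ∂μ, c ≤ X ω)
    (h_int : ∀ᶠ t in atTop, Integrable (fun ω => Real.exp (t * X ω)) μ) {c' : ℝ} (hc' : c' < c) :
    ∀ᶠ t in atTop, c' < cgf X μ t / t := by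
  set p := μ.real {ω | c ≤ X ω}
  have hp : 0 < p := by
    obtain ⟨t, h_int_t, ht⟩ := (h_int.and (eventually_gt_atTop 0)).exists
    refine ENNReal.toReal_pos ?_ (measure_le_lt_top_of_integrable_exp_mul ht c h_int_t).ne
    exact frequently_ae_iff.1 hc
  have tendsto_c : Tendsto (fun t : ℝ => c + Real.log p / t) atTop (𝓝 c) := by
    simpa only [add_zero, id_eq] using (tendsto_const_nhds.div_atTop tendsto_id).const_add c
  filter_upwards [tendsto_c.eventually_const_lt hc', h_int, eventually_gt_atTop 0]
    with t hct h_int_t ht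
  have log_le : t * c + Real.log p ≤ cgf X μ t := by
    rw [← Real.log_exp (t * c), ← Real.log_mul (Real.exp_pos _).ne' hp.ne']
    exact Real.log_le_log (by positivity) (exp_mul_measureReal_le_mgf ht.le c h_int_t)
  calc c' < c + Real.log p / t := hct
    _ = (t * c + Real.log p) / t := by field_simp
    _ ≤ cgf X μ t / t := by gcongr

theorem eventually_cgf_div_lt [NeZero μ] {b : ℝ} (hX : ∀ᵐ ω ∂μ, X ω ≤ b)
    (h_int : ∀ᶠ t in atTop, Integrable (fun ω => Real.exp (t * X ω)) μ) {b' : ℝ} (hb' : b < b') :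
    ∀ᶠ t in atTop, cgf X μ t / t < b' := by
  obtain ⟨t₀, h_int_t₀⟩ := h_int.exists
  have tendsto_b : Tendsto (fun t : ℝ => b + (cgf X μ t₀ - t₀ * b) / t) atTop (𝓝 b) := by
    simpa only [add_zero, id_eq] using (tendsto_const_nhds.div_atTop tendsto_id).const_add b
  filter_upwards [tendsto_b.eventually_lt_const hb', h_int, eventually_gt_atTop 0,
    eventually_ge_atTop t₀] with t htb h_int_t ht ht₀
  have cgf_le : cgf X μ t ≤ (t - t₀) * b + cgf X μ t₀ := by
    rw [← Real.log_exp ((t - t₀) * b), cgf, cgf,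
      ← Real.log_mul (Real.exp_pos _).ne' (mgf_pos_iff.2 h_int_t₀).ne']
    exact Real.log_le_log (mgf_pos_iff.2 h_int_t) (mgf_le_exp_mul_mgf_of_ae_le hX h_int_t₀ ht₀)
  calc cgf X μ t / t ≤ ((t - t₀) * b + cgf X μ t₀) / t := by gcongr
    _ = b + (cgf X μ t₀ - t₀ * b) / t := by field_simp; ring
    _ < b' := htb

theorem tendsto_cgf_div_atTop {b : ℝ} (hX : ∀ᵐ ω ∂μ, X ω ≤ b)
    (hb : ∀ c < b, ∃ᵐ ω ∂μ, c < X ω)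
    (h_int : ∀ᶠ t in atTop, Integrable (fun ω => Real.exp (t * X ω)) μ) :
    Tendsto (fun t => cgf X μ t / t) atTop (𝓝 b) := by
  have : NeZero μ := ⟨ae_neBot.1 (frequently_true_iff_neBot _ |>.1 <|
    (hb (b - 1) (sub_one_lt b)).mono fun _ _ => trivial)⟩
  refine tendsto_order.2 ⟨fun c hc => ?_, fun c hc => eventually_cgf_div_lt hX h_int hc⟩
  obtain ⟨c', hcc', hc'b⟩ := exists_between hc
  exact eventually_lt_cgf_div ((hb c' hc'b).mono fun _ => le_of_lt) h_int hcc'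

end LaplacePrinciple

section UpperSet

open ProbabilityTheory Topology

variable {ι : Type*} {S : Set (ι → ℝ)}

theorem subset_closure_interior_of_isUpperSet [Finite ι] (hS : IsUpperSet S) :
    S ⊆ closure (interior S) := by
  intro α hα
  have shift_tendsto : Tendsto (fun δ : ℝ => α + fun _ => δ) (𝓝[>] 0) (𝓝 α) := by
    have : Continuous fun δ : ℝ => α + fun _ : ι => δ := by fun_prop
    simpa using! (this.tendsto' 0 α (by ext; simp)).mono_left nhdsWithin_le_nhds
  refine mem_closure_of_tendsto shift_tendsto ?_
  filter_upwards [self_mem_nhdsWithin] with δ hδ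
  exact hS.mem_interior_of_forall_lt (subset_closure hα) fun i => lt_add_of_pos_right _ hδ

theorem frequently_ae_restrict_of_isUpperSet [Finite ι] {μ : Measure (ι → ℝ)}
    [μ.IsOpenPosMeasure] (hS : IsUpperSet S) {α : ι → ℝ} (hα : α ∈ S) {p : (ι → ℝ) → Prop}
    (hp : ∀ᶠ β in 𝓝 α, p β) :
    ∃ᵐ β ∂μ.restrict S, p β := by
  have h_pos : μ (interior {β | p β} ∩ interior S) ≠ 0 :=
    ((isOpen_interior.inter isOpen_interior).measure_pos μ <| mem_closure_iff.1
      (subset_closure_interior_of_isUpperSet hS hα) _ isOpen_interior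
      (mem_interior_iff_mem_nhds.2 hp)).ne'
  refine frequently_ae_iff.2 fun h_null => h_pos <| measure_mono_null ?_ <|
    nonpos_iff_eq_zero.1 ((Measure.le_restrict_apply S {β | p β}).trans h_null.le)
  exact Set.inter_subset_inter interior_subset interior_subset

variable [Fintype ι]

theorem integrableOn_exp_mul_neg_sum_Ici {t : ℝ} (ht : 0 < t) :
    IntegrableOn (fun α : ι → ℝ => Real.exp (t * -∑ b, α b)) (Set.Ici 0) := by
  have h_int : IntegrableOn (fun x : ℝ => Real.exp (-t * x)) (Set.Ici 0) :=
    (integrableOn_Ici_iff_integrableOn_Ioi (by simp)).2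
      (integrableOn_exp_mul_Ioi (neg_lt_zero.2 ht) 0)
  rw [← Set.pi_univ_Ici, IntegrableOn, volume_pi, Measure.restrict_pi_pi]
  refine (Integrable.fintype_prod fun _ : ι => h_int).congr (ae_of_all _ fun α => ?_)
  simp only [← Real.exp_sum, Finset.mul_sum, ← Finset.sum_neg_distrib, neg_mul, mul_neg]

theorem tendsto_cgf_neg_sum_div_atTop_of_isUpperSet (hS : IsUpperSet S) (hS₀ : S ⊆ Set.Ici 0)
    {a : ℝ} (ha : IsGLB ((fun α : ι → ℝ => ∑ b, α b) '' S) a) :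
    Tendsto (fun t => cgf (fun α => -∑ b, α b) (volume.restrict S) t / t) atTop (𝓝 (-a)) := by
  refine tendsto_cgf_div_atTop ?_ (fun c hc => ?_) ?_
  · refine (ae_restrict_iff (measurableSet_le (by fun_prop) (by fun_prop))).2 ?_
    exact ae_of_all _ fun α hα => neg_le_neg (ha.1 ⟨α, hα, rfl⟩)
  · obtain ⟨_, ⟨α, hα, rfl⟩, hαc⟩ := (isGLB_lt_iff ha).1 (lt_neg_of_lt_neg hc)
    refine frequently_ae_restrict_of_isUpperSet hS hα ?_
    have : Continuous fun β : ι → ℝ => -∑ b, β b := by fun_prop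
    exact (this.tendsto α).eventually_const_lt (lt_neg_of_lt_neg hαc)
  · filter_upwards [eventually_gt_atTop 0] with t ht
    exact (integrableOn_exp_mul_neg_sum_Ici ht).mono_set hS₀

end UpperSet

section ExceedanceSet

open Topology

/-- The vectors of the nonnegative orthant at least `x` of whose coordinates are `≥ θ`: the event
`S_ε` of the paper, with an arbitrary real count `x` in place of `B (1 - R / M)` and threshold `θ`
in place of `1 - ε`. -/
def exceedanceSet (ι : Type*) [Fintype ι] (x θ : ℝ) : Set (ι → ℝ) :=
  {α | (∀ b, 0 ≤ α b) ∧ x ≤ ((Finset.univ.filter fun b => θ ≤ α b).card : ℝ)}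

variable {ι : Type*} [Fintype ι] {x θ : ℝ}

theorem exceedanceSet_subset_Ici_zero : exceedanceSet ι x θ ⊆ Set.Ici 0 := fun _ hα => hα.1

theorem isUpperSet_exceedanceSet : IsUpperSet (exceedanceSet ι x θ) := by
  rintro α β hαβ ⟨hα₀, hαx⟩
  refine ⟨fun b => (hα₀ b).trans (hαβ b), hαx.trans ?_⟩
  gcongr with b
  exact hαβ b

theorem natCeil_mul_le_sum_of_mem_exceedanceSet (hθ : 0 ≤ θ) {α : ι → ℝ}
    (hα : α ∈ exceedanceSet ι x θ) : ⌈x⌉₊ * θ ≤ ∑ b, α b := by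
  obtain ⟨hα₀, hαx⟩ := hα
  calc (⌈x⌉₊ : ℝ) * θ ≤ (Finset.univ.filter fun b => θ ≤ α b).card * θ := by
        gcongr
        exact Nat.ceil_le.2 hαx
    _ = (Finset.univ.filter fun b => θ ≤ α b).card • θ := (nsmul_eq_mul _ _).symm
    _ ≤ ∑ b with θ ≤ α b, α b :=
        Finset.card_nsmul_le_sum _ _ _ fun b hb => (Finset.mem_filter.1 hb).2
    _ ≤ ∑ b, α b := Finset.sum_le_univ_sum_of_nonneg hα₀

theorem indicator_const_mem_exceedanceSet (hθ : 0 ≤ θ) {T : Finset ι} (hT : x ≤ T.card) :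
    (T : Set ι).indicator (fun _ => θ) ∈ exceedanceSet ι x θ := by
  refine ⟨fun b => Set.indicator_nonneg (fun _ _ => hθ) b, hT.trans ?_⟩
  gcongr
  intro b hb
  simp [hb]

theorem isLeast_sum_exceedanceSet (hx : x ≤ Fintype.card ι) (hθ : 0 ≤ θ) :
    IsLeast ((fun α : ι → ℝ => ∑ b, α b) '' exceedanceSet ι x θ) (⌈x⌉₊ * θ) := by
  obtain ⟨T, -, hT⟩ := Finset.exists_subset_card_eq (s := (Finset.univ : Finset ι))
    (Nat.ceil_le.2 hx)
  refine ⟨⟨_, indicator_const_mem_exceedanceSet hθ (T := T) (hT ▸ Nat.le_ceil x), ?_⟩, ?_⟩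
  · simp only [Finset.sum_indicator_subset _ T.subset_univ, Finset.sum_const, hT, nsmul_eq_mul]
  · rintro _ ⟨α, hα, rfl⟩
    exact natCeil_mul_le_sum_of_mem_exceedanceSet hθ hα

theorem rpow_neg_mul_eq_exp {s : ℝ} (hs : 0 < s) (m y : ℝ) :
    s ^ (-(m * y)) = Real.exp (m * Real.log s * -y) := by
  rw [Real.rpow_def_of_pos hs]
  ring_nf

theorem stmt_16_general {m : ℝ} (hm : 0 < m) (hx : x ≤ Fintype.card ι) (hθ : 0 ≤ θ) :
    (∀ s : ℝ, 1 < s →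
      IntegrableOn (fun α : ι → ℝ => s ^ (-(m * ∑ b, α b))) (exceedanceSet ι x θ)) ∧
    Tendsto (fun s : ℝ =>
        -Real.log (∫ α in exceedanceSet ι x θ, s ^ (-(m * ∑ b, α b))) / Real.log s)
      atTop (𝓝 (m * θ * ⌈x⌉₊)) := by
  constructor
  · intro s hs
    simp only [rpow_neg_mul_eq_exp (one_pos.trans hs)]
    exact (integrableOn_exp_mul_neg_sum_Ici (mul_pos hm (Real.log_pos hs))).mono_set
      exceedanceSet_subset_Ici_zero
  · have laplace := (tendsto_cgf_neg_sum_div_atTop_of_isUpperSet isUpperSet_exceedanceSet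
      exceedanceSet_subset_Ici_zero (isLeast_sum_exceedanceSet hx hθ).isGLB).comp
      (Real.tendsto_log_atTop.const_mul_atTop hm)
    have h_lim : -m * -(⌈x⌉₊ * θ) = m * θ * ⌈x⌉₊ := by ring
    refine h_lim ▸ (laplace.const_mul (-m)).congr' ?_
    filter_upwards [eventually_gt_atTop 1] with s hs
    have := Real.log_pos hs
    simp only [rpow_neg_mul_eq_exp (one_pos.trans hs), Function.comp_apply, ProbabilityTheory.cgf,
      ProbabilityTheory.mgf]
    field_simp

end ExceedanceSet

/-- the Laplace-principle exponent of I(s) = ∫_{S_ε} s^{-m Σ_b α_b} dα is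
m(1-ε)⌈B(1-R/M)⌉. -/
theorem stmt_16 (m : ℝ) (hm : 0 < m) (B M : ℕ) (hB : 0 < B) (hM : 0 < M)
    (R : ℝ) (hR0 : 0 < R) (hRM : R ≤ (M : ℝ)) (ε : ℝ) (hε0 : 0 < ε) (hε1 : ε < 1)
    (Sε : Set (Fin B → ℝ))
    (hSε : Sε = {α : Fin B → ℝ | (∀ b, 0 ≤ α b) ∧
      (B : ℝ) * (1 - R / (M : ℝ))
        ≤ ((Finset.univ.filter fun b => 1 - ε ≤ α b).card : ℝ)})
    (k : ℕ) (hk : (k : ℤ) = ⌈(B : ℝ) * (1 - R / (M : ℝ))⌉) :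
    (∀ s : ℝ, 1 < s →
      IntegrableOn (fun α : Fin B → ℝ => s ^ (-(m * ∑ b, α b))) Sε
        MeasureTheory.volume) ∧
    Filter.Tendsto (fun s : ℝ =>
        -Real.log (∫ α in Sε, s ^ (-(m * ∑ b, α b))) / Real.log s)
      Filter.atTop (nhds (m * (1 - ε) * (k : ℝ))) := by
  have hx : (B : ℝ) * (1 - R / M) ≤ Fintype.card (Fin B) := by
    rw [Fintype.card_fin]
    exact mul_le_of_le_one_right B.cast_nonneg (sub_le_self 1 (by positivity))
  have hk_ceil : k = ⌈(B : ℝ) * (1 - R / M)⌉₊ := by rw [← Int.ceil_toNat, ← hk, Int.toNat_natCast]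
  subst hSε hk_ceil
  exact stmt_16_general hm hx (sub_nonneg.2 hε1.le)
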